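/- arXiv:2110.12954 — 5 statements merged into one kernel-verified Lean document; each statement's English description precedes it below -/
import Mathlib

section
/- Let P be a three-criteria Pareto set of S. If two journeys J and J' in P have the same arrival time and the same number of used trips (i.e., the first two components of c J and c J' coincide), then J = J'. In particular, for a fixed arrival time and a fixed number of trips, the Pareto set contains at most one journey. -/
/-- A three-criteria Pareto set of `S`: a subset `P ⊆ S` of minimum cardinality such that
every journey in `S` is weakly dominated (componentwise `≤` on all three criteria)
by some journey in `P`. -/
def IsParetoSet {J : Type*} (S : Finset J) (c : J → ℕ × ℕ × ℕ) (P : Finset J) : Prop :=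
  P ⊆ S ∧ (∀ j ∈ S, ∃ p ∈ P, c p ≤ c j) ∧
    ∀ Q : Finset J, Q ⊆ S → (∀ j ∈ S, ∃ q ∈ Q, c q ≤ c j) → P.card ≤ Q.card

/-- Every member of `S` is weakly dominated, with respect to the criteria `c`, by some member
of `P`. This is the covering condition of a Pareto set, for arbitrary sets and preordered criteria;
`P` is not required to be a subset of `S`. -/
def WeaklyDominates {J α : Type*} [Preorder α] (c : J → α) (P S : Set J) : Prop :=
  ∀ j ∈ S, ∃ p ∈ P, c p ≤ c j

section Preorder

variable {J α : Type*} [Preorder α] {c : J → α} {P S : Set J}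

theorem WeaklyDominates.sdiff_singleton {a b : J} (hP : WeaklyDominates c P S) (ha : a ∈ P)
    (hne : a ≠ b) (hab : c a ≤ c b) : WeaklyDominates c (P \ {b}) S := by
  intro j hj
  obtain ⟨p, hp, hpj⟩ := hP j hj
  by_cases hpb : p = b
  · have haj : c a ≤ c j := hab.trans (hpb ▸ hpj)
    exact ⟨a, ⟨ha, hne⟩, haj⟩
  · exact ⟨p, ⟨hp, hpb⟩, hpj⟩

theorem isAntichain_of_minimal_weaklyDominates (hP : Minimal (WeaklyDominates c · S) P) :
    IsAntichain (fun a b => c a ≤ c b) P := by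
  intro a ha b hb hne hab
  have hsdiff : WeaklyDominates c (P \ {b}) S := hP.prop.sdiff_singleton ha hne hab
  have hsub : P ⊆ P \ {b} := hP.le_of_le hsdiff Set.sdiff_subset
  exact (hsub hb).2 rfl

end Preorder

theorem IsParetoSet.minimal_weaklyDominates {J : Type*} {S P : Finset J} {c : J → ℕ × ℕ × ℕ}
    (hP : IsParetoSet S c P) : Minimal (WeaklyDominates c · (S : Set J)) (P : Set J) := by
  obtain ⟨hPS, hdom, hcard⟩ := hP
  refine ⟨hdom, fun Q hQ hQP => ?_⟩
  lift Q to Finset J using P.finite_toSet.subset hQP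
  have hQP' : Q ⊆ P := Finset.coe_subset.mp hQP
  have hQ_eq : Q = P := Finset.eq_of_subset_of_card_le hQP' (hcard Q (hQP'.trans hPS) hQ)
  exact Finset.coe_subset.mpr hQ_eq.ge

theorem pareto_unique_of_arrival_trips_eq_general {J α β γ : Type*} [Preorder α] [Preorder β]
    [LinearOrder γ] {S P : Set J} {c : J → α × β × γ}
    (hP : Minimal (WeaklyDominates c · S) P) {j j' : J} (hj : j ∈ P) (hj' : j' ∈ P)
    (harr : (c j).1 = (c j').1) (htrips : (c j).2.1 = (c j').2.1) : j = j' := by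
  have hanti := isAntichain_of_minimal_weaklyDominates hP
  rcases le_total (c j).2.2 (c j').2.2 with hle | hge
  · exact hanti.eq hj hj' ⟨harr.le, htrips.le, hle⟩
  · exact hanti.eq' hj hj' ⟨harr.ge, htrips.ge, hge⟩

/-- If two journeys of a three-criteria Pareto set have the same arrival time and the
same number of used trips, they are equal. -/
theorem pareto_unique_of_arrival_trips_eq {J : Type*} (S : Finset J) (hS : S.Nonempty)
    (c : J → ℕ × ℕ × ℕ) (P : Finset J) (hP : IsParetoSet S c P)
    (j j' : J) (hj : j ∈ P) (hj' : j' ∈ P)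
    (harr : (c j).1 = (c j').1) (htrips : (c j).2.1 = (c j').2.1) :
    j = j' :=
  pareto_unique_of_arrival_trips_eq_general hP.minimal_weaklyDominates hj hj' harr htrips
end

section
/- Let P be a three-criteria Pareto set of S. Then the image c '' P is exactly the set of minimal criteria vectors of S, i.e., c '' P = { v ∈ c '' S | ∀ w ∈ c '' S, (w ≤ v componentwise) → w = v }. -/
section Dominating

variable {J α : Type*} {S P : Set J} {c : J → α} {p q : J}

/-- `P` is a subset of `S` that weakly dominates all of `S` with respect to the criteria `c`. An
irredundant such `P` is expressed by `Minimal (IsDominatingSubset S c) P`, where sets are ordered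
by inclusion. -/
def IsDominatingSubset [LE α] (S : Set J) (c : J → α) (P : Set J) : Prop :=
  P ⊆ S ∧ ∀ j ∈ S, ∃ p ∈ P, c p ≤ c j

namespace IsDominatingSubset

theorem sdiff_singleton [Preorder α] (hP : IsDominatingSubset S c P) (hq : q ∈ P) (hqp : q ≠ p)
    (hle : c q ≤ c p) : IsDominatingSubset S c (P \ {p}) := by
  refine ⟨Set.sdiff_subset.trans hP.1, fun j hj ↦ ?_⟩
  obtain ⟨r, hr, hrj⟩ := hP.2 j hj
  obtain rfl | hrp := eq_or_ne r p
  · exact ⟨q, ⟨hq, hqp⟩, hle.trans hrj⟩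
  · exact ⟨r, ⟨hr, hrp⟩, hrj⟩

theorem eq_of_minimal_of_le [Preorder α] (hP : Minimal (IsDominatingSubset S c) P) (hp : p ∈ P)
    (hq : q ∈ P) (hle : c q ≤ c p) : q = p := by
  by_contra hqp
  have hsub : P ⊆ P \ {p} := hP.2 (hP.1.sdiff_singleton hq hqp hle) Set.sdiff_subset
  exact (hsub hp).2 rfl

theorem minimal_apply_of_minimal [Preorder α] (hP : Minimal (IsDominatingSubset S c) P)
    (hp : p ∈ P) : Minimal (· ∈ c '' S) (c p) := by
  refine ⟨Set.mem_image_of_mem c (hP.1.1 hp), ?_⟩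
  rintro _ ⟨s, hs, rfl⟩ hsp
  obtain ⟨q, hq, hqs⟩ := hP.1.2 s hs
  have hqp : q = p := eq_of_minimal_of_le hP hp hq (hqs.trans hsp)
  exact hqp ▸ hqs

theorem mem_image_of_minimal [PartialOrder α] (hP : IsDominatingSubset S c P) {v : α}
    (hv : Minimal (· ∈ c '' S) v) : v ∈ c '' P := by
  obtain ⟨s, hs, rfl⟩ := hv.prop
  obtain ⟨p, hp, hps⟩ := hP.2 s hs
  exact ⟨p, hp, hv.eq_of_le (Set.mem_image_of_mem c (hP.1 hp)) hps⟩

end IsDominatingSubset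

theorem pareto_image_eq_minimals_general [PartialOrder α]
    (hP : Minimal (IsDominatingSubset S c) P) :
    c '' P = {v ∈ c '' S | ∀ w ∈ c '' S, w ≤ v → w = v} := by
  apply Set.Subset.antisymm
  · rintro _ ⟨p, hp, rfl⟩
    have hmin := IsDominatingSubset.minimal_apply_of_minimal hP hp
    exact ⟨hmin.prop, fun _ hw hwp ↦ hmin.eq_of_le hw hwp⟩
  · rintro v ⟨hv, hmin⟩
    exact hP.prop.mem_image_of_minimal ⟨hv, fun w hw hwv ↦ (hmin w hw hwv).ge⟩

end Dominating

theorem IsParetoSet.minimal_isDominatingSubset {J : Type*} {S P : Finset J} {c : J → ℕ × ℕ × ℕ}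
    (hP : IsParetoSet S c P) : Minimal (IsDominatingSubset (S : Set J) c) (P : Set J) := by
  obtain ⟨hPS, hdom, hcard⟩ := hP
  refine ⟨⟨Finset.coe_subset.2 hPS, hdom⟩, fun Q hQ hQP ↦ ?_⟩
  obtain ⟨Q, rfl⟩ := (P.finite_toSet.subset hQP).exists_finset_coe
  have hle : P.card ≤ Q.card := hcard Q (Finset.coe_subset.1 hQ.1) hQ.2
  exact (Finset.eq_of_subset_of_card_le (Finset.coe_subset.1 hQP) hle).ge

/-- The image under `c` of a three-criteria Pareto set is exactly the set of
minimal criteria vectors of `S`. -/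
theorem pareto_image_eq_minimals {J : Type*} (S : Finset J) (hS : S.Nonempty)
    (c : J → ℕ × ℕ × ℕ) (P : Finset J) (hP : IsParetoSet S c P) :
    c '' (P : Set J) =
      {v ∈ c '' (S : Set J) | ∀ w ∈ c '' (S : Set J), w ≤ v → w = v} :=
  pareto_image_eq_minimals_general hP.minimal_isDominatingSubset
end

section
/- Let P be a three-criteria Pareto set of S. Then c is injective on P, and the cardinality of P equals the number of minimal criteria vectors of S, i.e., |P| = |{ v ∈ c '' S | ∀ w ∈ c '' S, (w ≤ v componentwise) → w = v }|. In particular, all three-criteria Pareto sets of S have the same cardinality and the same image under c. -/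
/-!
Weak domination is transitive, so a dominating set containing `p ≠ q` with `c p ≤ c q` still
dominates after `q` is removed. An inclusion-minimal dominating set is therefore an antichain for
`c`, which makes `c` injective on it and its criteria vectors minimal. Conversely, a minimal vector
is weakly dominated by some vector of the set, and minimality forces the two to be equal.
-/

/-- `P` is a set of journeys from `S` that weakly dominates all of `S` with respect to the criteria
map `c`. No minimality is built in: a Pareto set is in particular a `Minimal` such `P` under
inclusion, and `S` and `P` may be infinite. -/
def IsDominatingSet {J α : Type*} [LE α] (S : Set J) (c : J → α) (P : Set J) : Prop :=
  P ⊆ S ∧ ∀ j ∈ S, ∃ p ∈ P, c p ≤ c j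

namespace IsDominatingSet

section Preorder

variable {J α : Type*} [Preorder α] {S P : Set J} {c : J → α} {p q : J}

theorem sdiff_singleton (hP : IsDominatingSet S c P) (hp : p ∈ P) (hne : p ≠ q)
    (hpq : c p ≤ c q) : IsDominatingSet S c (P \ {q}) := by
  refine ⟨Set.sdiff_subset.trans hP.1, fun j hj => ?_⟩
  obtain ⟨r, hr, hrj⟩ := hP.2 j hj
  by_cases hrq : r = q
  · exact ⟨p, ⟨hp, hne⟩, hpq.trans (hrq ▸ hrj)⟩
  · exact ⟨r, ⟨hr, hrq⟩, hrj⟩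

theorem eq_of_minimal_of_le (hP : Minimal (IsDominatingSet S c) P) (hp : p ∈ P) (hq : q ∈ P)
    (hpq : c p ≤ c q) : p = q := by
  by_contra hne
  have hsub : P ⊆ P \ {q} :=
    hP.le_of_le (hP.prop.sdiff_singleton hp hne hpq) Set.sdiff_subset
  exact (hsub hq).2 rfl

theorem injOn_of_minimal (hP : Minimal (IsDominatingSet S c) P) : Set.InjOn c P :=
  fun _ hp _ hq hpq => eq_of_minimal_of_le hP hp hq hpq.le

theorem minimal_apply_of_minimal (hP : Minimal (IsDominatingSet S c) P) (hp : p ∈ P) :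
    Minimal (· ∈ c '' S) (c p) := by
  refine ⟨Set.mem_image_of_mem c (hP.prop.1 hp), ?_⟩
  rintro _ ⟨s, hs, rfl⟩ hsp
  obtain ⟨q, hq, hqs⟩ := hP.prop.2 s hs
  have hqp : q = p := eq_of_minimal_of_le hP hq hp (hqs.trans hsp)
  exact hqp ▸ hqs

end Preorder

section PartialOrder

variable {J α : Type*} [PartialOrder α] {S P : Set J} {c : J → α}

theorem mem_image_of_minimal (hP : IsDominatingSet S c P) {v : α}
    (hv : Minimal (· ∈ c '' S) v) : v ∈ c '' P := by
  obtain ⟨s, hs, rfl⟩ := hv.prop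
  obtain ⟨p, hp, hps⟩ := hP.2 s hs
  exact ⟨p, hp, hv.eq_of_le (Set.mem_image_of_mem c (hP.1 hp)) hps⟩

theorem image_eq_of_minimal (hP : Minimal (IsDominatingSet S c) P) :
    c '' P = {v | Minimal (· ∈ c '' S) v} :=
  Set.Subset.antisymm (Set.image_subset_iff.2 fun _ hp => minimal_apply_of_minimal hP hp)
    fun _ hv => hP.prop.mem_image_of_minimal hv

theorem encard_eq_of_minimal (hP : Minimal (IsDominatingSet S c) P) :
    P.encard = {v | Minimal (· ∈ c '' S) v}.encard := by
  rw [← image_eq_of_minimal hP, (injOn_of_minimal hP).encard_image]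

end PartialOrder

end IsDominatingSet

theorem IsParetoSet.minimal_isDominatingSet {J : Type*} {S P : Finset J} {c : J → ℕ × ℕ × ℕ}
    (hP : IsParetoSet S c P) : Minimal (IsDominatingSet (S : Set J) c) (P : Set J) := by
  obtain ⟨hPS, hdom, hcard⟩ := hP
  refine ⟨⟨Finset.coe_subset.2 hPS, hdom⟩, fun Q hQ hQP => ?_⟩
  lift Q to Finset J using P.finite_toSet.subset hQP
  have hPQ : P.card ≤ Q.card := hcard Q (Finset.coe_subset.1 hQ.1) hQ.2
  exact (Finset.eq_of_subset_of_card_le (Finset.coe_subset.1 hQP) hPQ).ge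

theorem setOfPred_minimal_mem_eq {α : Type*} [PartialOrder α] (s : Set α) :
    {v | Minimal (· ∈ s) v} = {v ∈ s | ∀ w ∈ s, w ≤ v → w = v} := by
  ext v
  simp only [minimal_mem_iff, Set.mem_ofPred_eq, eq_comm]

theorem pareto_injOn_card_general {J α : Type*} [PartialOrder α] {S : Set J} {c : J → α}
    {P : Set J} (hP : Minimal (IsDominatingSet S c) P) :
    Set.InjOn c P ∧
    P.encard = {v ∈ c '' S | ∀ w ∈ c '' S, w ≤ v → w = v}.encard ∧
    ∀ P' : Set J, Minimal (IsDominatingSet S c) P' →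
      P.encard = P'.encard ∧ c '' P = c '' P' := by
  rw [← setOfPred_minimal_mem_eq]
  refine ⟨IsDominatingSet.injOn_of_minimal hP, IsDominatingSet.encard_eq_of_minimal hP,
    fun P' hP' => ⟨?_, ?_⟩⟩
  · rw [IsDominatingSet.encard_eq_of_minimal hP, IsDominatingSet.encard_eq_of_minimal hP']
  · rw [IsDominatingSet.image_eq_of_minimal hP, IsDominatingSet.image_eq_of_minimal hP']

/-- On a three-criteria Pareto set `P`, the criteria map `c` is injective, and `|P|`
equals the number of minimal criteria vectors of `S`. In particular, any two
three-criteria Pareto sets of `S` have the same cardinality and the same image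
under `c`. -/
theorem pareto_injOn_card {J : Type*} (S : Finset J) (hS : S.Nonempty)
    (c : J → ℕ × ℕ × ℕ) (P : Finset J) (hP : IsParetoSet S c P) :
    Set.InjOn c (P : Set J) ∧
    P.card = {v ∈ c '' (S : Set J) | ∀ w ∈ c '' (S : Set J), w ≤ v → w = v}.ncard ∧
    ∀ P' : Finset J, IsParetoSet S c P' →
      P.card = P'.card ∧ c '' (P : Set J) = c '' (P' : Set J) := by
  obtain ⟨hinj, hcard, huniq⟩ := pareto_injOn_card_general hP.minimal_isDominatingSet
  exact ⟨hinj, by rw [Set.ncard, ← hcard, Set.encard_coe_eq_coe_finsetCard, ENat.toNat_natCast],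
    fun P' hP' => by simpa using huniq P' hP'.minimal_isDominatingSet⟩
end

section
/- Let P be a three-criteria Pareto set of S and A an anchor Pareto set of S. Then for every anchor journey a ∈ A there exists a journey J ∈ P with the same arrival time and the same number of trips as a, i.e., π(J) = π(a). -/
/-- An anchor Pareto set of `S`: a subset `A ⊆ S` of minimum cardinality such that every
journey in `S` is weakly dominated in the two criteria arrival time (first component)
and number of trips (second component) by some journey in `A`. -/
def IsAnchorParetoSet {J : Type*} (S : Finset J) (c : J → ℕ × ℕ × ℕ) (A : Finset J) : Prop :=
  A ⊆ S ∧ (∀ j ∈ S, ∃ a ∈ A, (c a).1 ≤ (c j).1 ∧ (c a).2.1 ≤ (c j).2.1) ∧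
    ∀ Q : Finset J, Q ⊆ S →
      (∀ j ∈ S, ∃ q ∈ Q, (c q).1 ≤ (c j).1 ∧ (c q).2.1 ≤ (c j).2.1) → A.card ≤ Q.card

/-- `Q ⊆ S` weakly dominates `S` with respect to the criteria `f`, all to be minimized. Sets and
an arbitrary preorder of values are allowed, so that one notion covers both three and two
criteria. -/
structure IsDominatingSubset_s6 {J α : Type*} [Preorder α] (f : J → α) (S Q : Set J) : Prop where
  subset : Q ⊆ S
  exists_le : ∀ j ∈ S, ∃ q ∈ Q, f q ≤ f j

section IsDominatingSubset_s6

variable {J α β : Type*} {S Q R P A : Set J} {a b : J}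

theorem IsDominatingSubset_s6.trans [Preorder α] {f : J → α} (hRQ : IsDominatingSubset_s6 f Q R)
    (hQS : IsDominatingSubset_s6 f S Q) : IsDominatingSubset_s6 f S R where
  subset := hRQ.subset.trans hQS.subset
  exists_le j hj := by
    obtain ⟨q, hq, hqj⟩ := hQS.exists_le j hj
    obtain ⟨r, hr, hrq⟩ := hRQ.exists_le q hq
    exact ⟨r, hr, hrq.trans hqj⟩

theorem IsDominatingSubset_s6.monotone_comp [Preorder α] [Preorder β] {f : J → α} {g : α → β}
    (hg : Monotone g) (hQ : IsDominatingSubset_s6 f S Q) : IsDominatingSubset_s6 (g ∘ f) S Q where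
  subset := hQ.subset
  exists_le j hj := (hQ.exists_le j hj).imp fun _ ⟨hq, hqj⟩ => ⟨hq, hg hqj⟩

theorem isDominatingSubset_sdiff_singleton [Preorder α] {f : J → α} (hb : b ∈ Q) (hba : b ≠ a)
    (hle : f b ≤ f a) : IsDominatingSubset_s6 f Q (Q \ {a}) where
  subset := Set.sdiff_subset
  exists_le j hj := by
    obtain rfl | hja := eq_or_ne j a
    · exact ⟨b, ⟨hb, hba⟩, hle⟩
    · exact ⟨j, ⟨hj, hja⟩, le_rfl⟩

theorem eq_of_le_of_minimal_isDominatingSubset [Preorder α] {f : J → α}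
    (hA : Minimal (IsDominatingSubset_s6 f S) A) (ha : a ∈ A) (hb : b ∈ A) (hle : f b ≤ f a) :
    b = a := by
  by_contra hba
  have hdom : IsDominatingSubset_s6 f S (A \ {a}) :=
    (isDominatingSubset_sdiff_singleton hb hba hle).trans hA.prop
  exact (hA.le_of_le hdom Set.sdiff_subset ha).2 rfl

theorem minimal_isDominatingSubset_of_card_le [Preorder α] {f : J → α} {A : Finset J}
    (hA : IsDominatingSubset_s6 f S A)
    (hcard : ∀ Q : Finset J, IsDominatingSubset_s6 f S Q → A.card ≤ Q.card) :
    Minimal (IsDominatingSubset_s6 f S) (A : Set J) := by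
  refine ⟨hA, fun Q hQ hQA => ?_⟩
  lift Q to Finset J using A.finite_toSet.subset hQA
  exact (Finset.eq_of_subset_of_card_le (Finset.coe_subset.1 hQA) (hcard Q hQ)).ge

theorem pareto_contains_anchor_projection_general [Preorder α] [PartialOrder β] {c : J → α}
    {g : α → β} (hg : Monotone g) (hP : IsDominatingSubset_s6 c S P)
    (hA : Minimal (IsDominatingSubset_s6 (g ∘ c) S) A) :
    ∀ a ∈ A, ∃ j ∈ P, g (c j) = g (c a) := by
  intro a ha
  have hPg : IsDominatingSubset_s6 (g ∘ c) S P := hP.monotone_comp hg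
  obtain ⟨j, hj, hja⟩ := hPg.exists_le a (hA.prop.subset ha)
  obtain ⟨b, hb, hbj⟩ := hA.prop.exists_le j (hP.subset hj)
  obtain rfl : b = a := eq_of_le_of_minimal_isDominatingSubset hA ha hb (hbj.trans hja)
  exact ⟨j, hj, hja.antisymm hbj⟩

end IsDominatingSubset_s6

/-- The two-criteria projection `π` on criteria vectors: it keeps arrival time and number of trips
and forgets transfer time. -/
def twoCriteria (v : ℕ × ℕ × ℕ) : ℕ × ℕ := (v.1, v.2.1)

theorem monotone_twoCriteria : Monotone twoCriteria :=
  fun _ _ h => ⟨h.1, h.2.1⟩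

theorem IsParetoSet.isDominatingSubset {J : Type*} {S P : Finset J} {c : J → ℕ × ℕ × ℕ}
    (hP : IsParetoSet S c P) : IsDominatingSubset_s6 c (S : Set J) P :=
  ⟨Finset.coe_subset.2 hP.1, hP.2.1⟩

theorem IsAnchorParetoSet.minimal_isDominatingSubset {J : Type*} {S A : Finset J}
    {c : J → ℕ × ℕ × ℕ} (hA : IsAnchorParetoSet S c A) :
    Minimal (IsDominatingSubset_s6 (twoCriteria ∘ c) (S : Set J)) (A : Set J) := by
  obtain ⟨hAS, hdom, hcard⟩ := hA
  exact minimal_isDominatingSubset_of_card_le ⟨Finset.coe_subset.2 hAS, hdom⟩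
    fun Q hQ => hcard Q (Finset.coe_subset.1 hQ.subset) hQ.exists_le

/-- For every anchor journey `a ∈ A` there is a journey in the three-criteria Pareto
set `P` with the same arrival time and the same number of trips as `a`. -/
theorem pareto_contains_anchor_projection {J : Type*} (S : Finset J) (hS : S.Nonempty)
    (c : J → ℕ × ℕ × ℕ) (P A : Finset J)
    (hP : IsParetoSet S c P) (hA : IsAnchorParetoSet S c A) :
    ∀ a ∈ A, ∃ j ∈ P, (c j).1 = (c a).1 ∧ (c j).2.1 = (c a).2.1 := by
  simpa only [twoCriteria, SetLike.mem_coe, Prod.mk.injEq] using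
    pareto_contains_anchor_projection_general
      monotone_twoCriteria hP.isDominatingSubset hA.minimal_isDominatingSubset
end

section
/- Let V ⊆ ℕ × ℕ × ℕ be a finite set of criteria vectors (arrival time, number of trips, transfer time) and n ∈ ℕ such that every v ∈ V has second component at most n. Let V* := { v ∈ V | for all w ∈ V, (w₁ ≤ v₁ and w₃ ≤ v₃) implies (w₁ = v₁ and w₃ = v₃) } be the subset of vectors minimal with respect to arrival time and transfer time alone. Then for every vector u ∈ ℕ × ℕ × ℕ with second component u₂ ≥ n, the following are equivalent: (1) there exists v ∈ V with v ≤ u componentwise; (2) there exists v ∈ V* with v₁ ≤ u₁ and v₃ ≤ u₃. -/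
section MinimalFor

variable {ι α : Type*} [Preorder α]

theorem exists_minimalFor_le_of_isWF_image {f : ι → α} {s : Set ι} (hs : (f '' s).IsWF)
    {i : ι} (hi : i ∈ s) : ∃ j, MinimalFor (· ∈ s) f j ∧ f j ≤ f i := by
  have hwf : (f '' s ∩ Set.Iic (f i)).IsWF := hs.mono Set.inter_subset_left
  obtain ⟨_, ⟨⟨j, hj, rfl⟩, hji⟩, hmin⟩ :=
    Set.WellFoundedOn.exists_minimal hwf ⟨f i, Set.mem_image_of_mem f hi, le_rfl⟩
  exact ⟨j, ⟨hj, fun k hk hkj ↦ hmin ⟨Set.mem_image_of_mem f hk, hkj.trans hji⟩ hkj⟩, hji⟩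

theorem exists_mem_le_iff_exists_minimalFor_le {f : ι → α} {s : Set ι} (hs : (f '' s).IsWF)
    (a : α) : (∃ i ∈ s, f i ≤ a) ↔ ∃ i, MinimalFor (· ∈ s) f i ∧ f i ≤ a := by
  constructor
  · rintro ⟨i, hi, hia⟩
    obtain ⟨j, hj, hji⟩ := exists_minimalFor_le_of_isWF_image hs hi
    exact ⟨j, hj, hji.trans hia⟩
  · rintro ⟨i, hi, hia⟩
    exact ⟨i, hi.prop, hia⟩

end MinimalFor

section BestBag

variable {α β γ : Type*}

/-- The pair (arrival time, transfer time) of a criteria vector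
(arrival time, number of trips, transfer time). -/
def timeCriteria (v : α × β × γ) : α × γ := (v.1, v.2.2)

/-- The best bag `V*` of `V`: the criteria vectors that are Pareto-optimal in `V` for arrival time
and transfer time. Vectors differing only in the number of trips are all kept. -/
def bestBag [LE α] [LE γ] (V : Set (α × β × γ)) : Set (α × β × γ) :=
  {v | MinimalFor (· ∈ V) timeCriteria v}

theorem bestBag_eq_setOf [PartialOrder α] [PartialOrder γ] (V : Set (α × β × γ)) :
    bestBag V = {v ∈ V | ∀ w ∈ V, w.1 ≤ v.1 ∧ w.2.2 ≤ v.2.2 → w.1 = v.1 ∧ w.2.2 = v.2.2} := by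
  ext v
  refine and_congr_right fun _ ↦ forall₃_congr fun w _ hwv ↦ ?_
  exact ⟨fun hvw ↦ Prod.ext_iff.1 (le_antisymm hwv hvw), fun h ↦ ⟨h.1.ge, h.2.ge⟩⟩

variable [Preorder α] [Preorder β] [Preorder γ]

theorem le_iff_timeCriteria_le {v u : α × β × γ} (h : v.2.1 ≤ u.2.1) :
    v ≤ u ↔ timeCriteria v ≤ timeCriteria u :=
  ⟨fun hvu ↦ ⟨hvu.1, hvu.2.2⟩, fun hvu ↦ ⟨hvu.1, h, hvu.2⟩⟩

theorem bestBag_dominance_check_general {V : Set (α × β × γ)} (hwf : (timeCriteria '' V).IsWF)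
    {n : β} (hV : ∀ v ∈ V, v.2.1 ≤ n) {u : α × β × γ} (hu : n ≤ u.2.1) :
    (∃ v ∈ V, v ≤ u) ↔ ∃ v ∈ bestBag V, v.1 ≤ u.1 ∧ v.2.2 ≤ u.2.2 :=
  calc
    (∃ v ∈ V, v ≤ u) ↔ ∃ v ∈ V, timeCriteria v ≤ timeCriteria u :=
      exists_congr fun v ↦ and_congr_right fun hv ↦ le_iff_timeCriteria_le ((hV v hv).trans hu)
    _ ↔ ∃ v ∈ bestBag V, timeCriteria v ≤ timeCriteria u :=
      exists_mem_le_iff_exists_minimalFor_le hwf (timeCriteria u)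

end BestBag

/-- Best-bag dominance check of McTB: if every found criteria vector in `V` has at most
`n` trips (second component), then for any vector `u` with at least `n` trips, `u` is
weakly dominated by some vector of `V` iff it is dominated in arrival time (first
component) and transfer time (third component) by some vector of the best bag `V*`,
the subset of `V` of vectors minimal with respect to arrival time and transfer time
alone. -/
theorem bestBag_dominance_check (V : Finset (ℕ × ℕ × ℕ)) (n : ℕ)
    (hV : ∀ v ∈ V, v.2.1 ≤ n) :
    ∀ u : ℕ × ℕ × ℕ, n ≤ u.2.1 →
      ((∃ v ∈ V, v ≤ u) ↔
        ∃ v ∈ {v ∈ (V : Set (ℕ × ℕ × ℕ)) |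
            ∀ w ∈ (V : Set (ℕ × ℕ × ℕ)), w.1 ≤ v.1 ∧ w.2.2 ≤ v.2.2 →
              w.1 = v.1 ∧ w.2.2 = v.2.2},
          v.1 ≤ u.1 ∧ v.2.2 ≤ u.2.2) := by
  intro u hu
  rw [← bestBag_eq_setOf]
  exact bestBag_dominance_check_general (V.finite_toSet.image timeCriteria).isWF hV hu
end
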